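/- (Christ–Kiselev lemma.) Let X and Y be Banach spaces, let −∞ ≤ a < b ≤ ∞, and let 1 ≤ p < q ≤ ∞. Let K : [a,b] × [a,b] → B(X,Y) be continuous, where B(X,Y) is the space of bounded linear operators from X to Y with the operator norm. For continuous, compactly supported f : [a,b] → X set Tf(t) = ∫_a^b K(t,s) f(s) ds and Wf(t) = ∫_a^t K(t,s) f(s) ds. If there is a constant C such that ‖Tf‖_{L^q([a,b],Y)} ≤ C ‖f‖_{L^p([a,b],X)} for all such f, then there is a constant C′ (depending only on C, p and q) such that ‖Wf‖_{L^q([a,b],Y)} ≤ C′ ‖f‖_{L^p([a,b],X)} for all such f. -/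

import Mathlib

/-!
The proof is a bisection argument on the best constant. Let `f` be supported in `[c, d]`, and let
`A` be the best constant in `‖W (1_J f)‖_{L^q(J)} ≤ A ‖f‖_{L^p(J)}` over all intervals `J ⊆ [c, d]`.
It is finite by Hölder's inequality, since the kernel is bounded on `[c, d]²`
(`exists_apriori_bound`). Cut `J` into a left part `J₁` and a right part `J₂` carrying equal
`L^p` mass of `f` (`exists_halving_point`). On `J₁`, `W (1_J f)` is `W (1_{J₁} f)`; on `J₂` it is
`W (1_{J₂} f) + T (1_{J₁} f)`. The two `W` terms live on disjoint sets, so their joint `L^q` norm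
is at most `2^{1/q} A 2^{-1/p} ‖f‖_{L^p(J)}`, whence `A ≤ θ A + C` with `θ = 2^{1/q - 1/p} < 1`
(`bisection_step`), and `A ≤ C / (1 - θ)` (`truncated_bound`). Outside `[c, d]` the operator `W`
is either zero or equal to `T`.

The bound for `T` is assumed only for continuous functions; it is extended to the sharp
truncations `1_{J₁} f` in `eLpNorm_integral_truncation_le`.
-/

noncomputable section
open MeasureTheory
open scoped ENNReal

/-- The interval `[a,b] ∩ ℝ` for extended-real endpoints `a, b`. -/
def erealInterval (a b : EReal) : Set ℝ :=
  {t : ℝ | a ≤ (t : EReal) ∧ (t : EReal) ≤ b}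

/-- Subadditivity of the `L^q` norm over sets, with the constant `2^{1/q}` (which is `1` for
`q = ∞`, since then `q.toReal = 0` and `1 / 0 = 0`). No measurability of `g` is required. -/
lemma eLpNorm_restrict_union_le {E : Type*} [NormedAddCommGroup E] {q : ℝ≥0∞} (hq : q ≠ 0)
    {μ : Measure ℝ} {g : ℝ → E} {S T : Set ℝ} {B : ℝ≥0∞}
    (hS : eLpNorm g q (μ.restrict S) ≤ B) (hT : eLpNorm g q (μ.restrict T) ≤ B) :
    eLpNorm g q (μ.restrict (S ∪ T)) ≤ 2 ^ (1 / q.toReal) * B := by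
  rcases eq_or_ne q ⊤ with rfl | hq'
  · simp only [ENNReal.toReal_top, div_zero, ENNReal.rpow_zero, one_mul]
    rw [eLpNorm_exponent_top] at *
    refine essSup_le_of_ae_le _ ?_
    refine (ae_restrict_union_iff S T _).2 ⟨?_, ?_⟩
    · filter_upwards [enorm_ae_le_eLpNormEssSup g (μ.restrict S)] with x hx using hx.trans hS
    · filter_upwards [enorm_ae_le_eLpNormEssSup g (μ.restrict T)] with x hx using hx.trans hT
  · have hpos : 0 < q.toReal := ENNReal.toReal_pos hq hq'
    rw [eLpNorm_eq_lintegral_rpow_enorm_toReal hq hq', one_div, ENNReal.rpow_inv_le_iff hpos]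
      at hS hT ⊢
    rw [ENNReal.mul_rpow_of_nonneg _ _ hpos.le, ENNReal.rpow_inv_rpow hpos.ne', two_mul]
    exact (lintegral_union_le _ _ _).trans (add_le_add hS hT)

/-- A continuous function can be cut at a point into two pieces carrying equal `L^p` mass. -/
lemma exists_halving_point {X : Type*} [NormedAddCommGroup X] {p : ℝ≥0∞} (hp : p ≠ 0)
    (hp' : p ≠ ⊤) {f : ℝ → X} (hf : Continuous f) {u v : ℝ} (huv : u ≤ v) :
    ∃ m ∈ Set.Icc u v,
      eLpNorm f p (volume.restrict (Set.Ioc u m))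
        = 2 ^ (-(1 / p.toReal)) * eLpNorm f p (volume.restrict (Set.Ioc u v)) ∧
      eLpNorm f p (volume.restrict (Set.Ioc m v))
        = 2 ^ (-(1 / p.toReal)) * eLpNorm f p (volume.restrict (Set.Ioc u v)) := by
  have hpos : 0 < p.toReal := ENNReal.toReal_pos hp hp'
  have hc : Continuous fun s => ‖f s‖ ^ p.toReal :=
    hf.norm.rpow_const fun _ => Or.inr hpos.le
  have hint : ∀ x y : ℝ, IntervalIntegrable (fun s => ‖f s‖ ^ p.toReal) volume x y :=
    fun x y => hc.intervalIntegrable x y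
  have key : ∀ x y : ℝ, x ≤ y → eLpNorm f p (volume.restrict (Set.Ioc x y))
      = ENNReal.ofReal (∫ s in x..y, ‖f s‖ ^ p.toReal) ^ (1 / p.toReal) := by
    intro x y hxy
    rw [eLpNorm_eq_lintegral_rpow_enorm_toReal hp hp', intervalIntegral.integral_of_le hxy,
      ofReal_integral_eq_lintegral_ofReal (hint x y).1
        (Filter.Eventually.of_forall fun s => by positivity)]
    congr 2
    ext s
    rw [← ENNReal.ofReal_rpow_of_nonneg (norm_nonneg _) hpos.le, ofReal_norm]
  set F : ℝ → ℝ := fun y => ∫ s in u..y, ‖f s‖ ^ p.toReal with hF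
  have hFc : Continuous F := intervalIntegral.continuous_primitive hint u
  have hFu : F u = 0 := by simp [hF]
  have hFv : 0 ≤ F v := intervalIntegral.integral_nonneg huv fun s _ => by positivity
  obtain ⟨m, hm, hFm⟩ := intermediate_value_Icc huv hFc.continuousOn
    (show F v / 2 ∈ Set.Icc (F u) (F v) by rw [hFu]; constructor <;> linarith)
  have hadd : F m + ∫ s in m..v, ‖f s‖ ^ p.toReal = F v :=
    intervalIntegral.integral_add_adjacent_intervals (hint u m) (hint m v)
  have hmv : ∫ s in m..v, ‖f s‖ ^ p.toReal = F v / 2 := by linarith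
  have hhalf : ENNReal.ofReal (F v / 2) ^ (1 / p.toReal)
      = 2 ^ (-(1 / p.toReal)) * ENNReal.ofReal (F v) ^ (1 / p.toReal) := by
    rw [div_eq_inv_mul, ENNReal.ofReal_mul (by norm_num), ENNReal.mul_rpow_of_nonneg _ _
      (by positivity), ENNReal.ofReal_inv_of_pos (by norm_num), ENNReal.rpow_neg,
      ENNReal.inv_rpow]
    norm_num
  refine ⟨m, hm, ?_, ?_⟩
  · rw [key u m hm.1, key u v huv, ← hhalf, ← hFm]
  · rw [key m v hm.2, key u v huv, ← hhalf, hmv]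

/-- A bound for the full operator tested on continuous cut-offs of `f` passes to the sharp
truncation of `f` to `(u, m)`: exhaust the interval by continuous cut-offs from below and apply
dominated convergence in `s` and Fatou's lemma in `t`. -/
lemma eLpNorm_integral_truncation_le {X Y : Type*} [NormedAddCommGroup X] [NormedSpace ℝ X]
    [NormedAddCommGroup Y] [NormedSpace ℝ Y] {p q C : ℝ≥0∞} {μ : Measure ℝ}
    {f : ℝ → X} {G : ℝ → ℝ → Y} (hG : Continuous (Function.uncurry G)) {u m : ℝ} (hum : u ≤ m)
    (hT : ∀ φ : ℝ → ℝ, Continuous φ → (∀ s, s ∉ Set.Ioo u m → φ s = 0) →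
      eLpNorm (fun t => ∫ s in u..m, φ s • G t s) q μ
        ≤ C * eLpNorm (fun s => φ s • f s) p volume) :
    eLpNorm (fun t => ∫ s in u..m, G t s) q μ
      ≤ C * eLpNorm f p (volume.restrict (Set.Ioc u m)) := by
  set φ : ℕ → ℝ → ℝ := fun n s => min 1 (n * max 0 (min (s - u) (m - s))) with hφ
  have hφc : ∀ n, Continuous (φ n) := fun n => by fun_prop
  have hφ0 : ∀ n s, 0 ≤ φ n s := fun n s => by simp only [hφ]; positivity
  have hφ1 : ∀ n s, φ n s ≤ 1 := fun n s => min_le_left _ _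
  have hφz : ∀ n s, s ∉ Set.Ioo u m → φ n s = 0 := by
    intro n s hs
    have : min (s - u) (m - s) ≤ 0 := by
      by_contra! h
      rw [lt_min_iff] at h
      exact hs ⟨by linarith, by linarith⟩
    simp [hφ, max_eq_left this]
  have hφt : ∀ s ∈ Set.Ioo u m, Filter.Tendsto (fun n => φ n s) Filter.atTop (nhds 1) := by
    intro s hs
    have hpos : 0 < min (s - u) (m - s) := lt_min (by linarith [hs.1]) (by linarith [hs.2])
    obtain ⟨N, hN⟩ := exists_nat_gt (1 / min (s - u) (m - s))
    refine tendsto_const_nhds.congr' ?_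
    filter_upwards [Filter.eventually_ge_atTop N] with n hn
    have h1 : (N : ℝ) ≤ n := by exact_mod_cast hn
    rw [div_lt_iff₀ hpos] at hN
    simp only [hφ, max_eq_right hpos.le]
    rw [min_eq_left]
    nlinarith
  have hGt : ∀ t, Continuous (G t) := fun t => hG.comp (by fun_prop : Continuous fun s => (t, s))
  refine (Lp.eLpNorm_lim_le_liminf_eLpNorm (f := fun n t => ∫ s in u..m, φ n s • G t s)
    (fun n => ?_) _ (Filter.Eventually.of_forall fun t => ?_)).trans ?_
  · refine (intervalIntegral.continuous_parametric_intervalIntegral_of_continuous' ?_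
      u m).aestronglyMeasurable
    exact ((hφc n).comp continuous_snd).smul hG
  · refine intervalIntegral.tendsto_integral_filter_of_dominated_convergence (fun s => ‖G t s‖)
      (Filter.Eventually.of_forall fun n => ((hφc n).smul (hGt t)).aestronglyMeasurable)
      (Filter.Eventually.of_forall fun n => Filter.Eventually.of_forall fun s _ => ?_)
      ((hGt t).norm.intervalIntegrable _ _) ?_
    · rw [norm_smul, Real.norm_of_nonneg (hφ0 n s)]
      exact mul_le_of_le_one_left (norm_nonneg _) (hφ1 n s)
    · have hne : ∀ᵐ s : ℝ, s ≠ m := by simp [ae_iff]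
      filter_upwards [hne] with s hs hsu
      rw [Set.uIoc_of_le hum] at hsu
      simpa using (hφt s ⟨hsu.1, lt_of_le_of_ne hsu.2 hs⟩).smul_const (G t s)
  · refine Filter.liminf_le_of_frequently_le' (Filter.Frequently.of_forall fun n => ?_)
    refine (hT (φ n) (hφc n) (hφz n)).trans ?_
    gcongr
    rw [← eLpNorm_indicator_eq_eLpNorm_restrict measurableSet_Ioc]
    refine eLpNorm_mono fun s => ?_
    by_cases hs : s ∈ Set.Ioo u m
    · rw [Set.indicator_of_mem (Set.Ioo_subset_Ioc_self hs), norm_smul,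
        Real.norm_of_nonneg (hφ0 n s)]
      exact mul_le_of_le_one_left (norm_nonneg _) (hφ1 n s)
    · simp [hφz n s hs]

/-- One bisection step: a bound for the truncated operator on all subintervals with constant `B`
improves to the constant `2^{1/q} B 2^{-1/p} + C`. -/
lemma bisection_step {X Y : Type*} [NormedAddCommGroup X] [NormedAddCommGroup Y] [NormedSpace ℝ Y]
    {p q C B : ℝ≥0∞} (hp : p ≠ 0) (hp' : p ≠ ⊤) (hq : 1 ≤ q) {c d : ℝ} {f : ℝ → X}
    {G : ℝ → ℝ → Y} (hf : Continuous f) (hG : Continuous (Function.uncurry G))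
    (hT : ∀ u m : ℝ, c ≤ u → u ≤ m → m ≤ d →
      eLpNorm (fun t => ∫ s in u..m, G t s) q (volume.restrict (Set.Ioc c d))
        ≤ C * eLpNorm f p (volume.restrict (Set.Ioc u m)))
    (hB : ∀ u v : ℝ, c ≤ u → u ≤ v → v ≤ d →
      eLpNorm (fun t => ∫ s in u..t, G t s) q (volume.restrict (Set.Ioc u v))
        ≤ B * eLpNorm f p (volume.restrict (Set.Ioc u v)))
    {u v : ℝ} (hu : c ≤ u) (huv : u ≤ v) (hv : v ≤ d) :
    eLpNorm (fun t => ∫ s in u..t, G t s) q (volume.restrict (Set.Ioc u v))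
      ≤ (2 ^ (1 / q.toReal) * 2 ^ (-(1 / p.toReal)) * B + C)
        * eLpNorm f p (volume.restrict (Set.Ioc u v)) := by
  obtain ⟨m, ⟨hum, hmv⟩, hL, hR⟩ := exists_halving_point hp hp' hf huv
  have hGt : ∀ t x y, IntervalIntegrable (G t) volume x y := fun t x y =>
    (hG.comp (by fun_prop : Continuous fun s => (t, s))).intervalIntegrable x y
  have hW : ∀ x : ℝ, Continuous fun t => ∫ s in x..t, G t s := fun x =>
    intervalIntegral.continuous_parametric_intervalIntegral_of_continuous hG continuous_id
  -- the two diagonal pieces, glued together at `m`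
  set g₁ : ℝ → Y := fun t => if t ≤ m then ∫ s in u..t, G t s else ∫ s in m..t, G t s with hg₁
  -- the off-diagonal piece
  set g₂ : ℝ → Y := (Set.Ioi m).indicator fun t => ∫ s in u..m, G t s with hg₂
  have hsum : (fun t => ∫ s in u..t, G t s) = g₁ + g₂ := by
    ext t
    by_cases ht : t ≤ m
    · simp [hg₁, hg₂, ht]
    · have ht' : m < t := not_le.1 ht
      simp only [hg₁, hg₂, Pi.add_apply, if_neg ht, Set.indicator_of_mem (Set.mem_Ioi.2 ht')]
      rw [add_comm, intervalIntegral.integral_add_adjacent_intervals (hGt _ _ _) (hGt _ _ _)]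
  have hm₁ : StronglyMeasurable g₁ :=
    StronglyMeasurable.ite measurableSet_Iic (hW u).stronglyMeasurable (hW m).stronglyMeasurable
  have hm₂ : StronglyMeasurable g₂ :=
    (intervalIntegral.continuous_parametric_intervalIntegral_of_continuous' hG u
      m).stronglyMeasurable.indicator measurableSet_Ioi
  have h₁ : eLpNorm g₁ q (volume.restrict (Set.Ioc u v)) ≤ 2 ^ (1 / q.toReal) *
      (B * (2 ^ (-(1 / p.toReal)) * eLpNorm f p (volume.restrict (Set.Ioc u v)))) := by
    rw [← Set.Ioc_union_Ioc_eq_Ioc hum hmv]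
    refine eLpNorm_restrict_union_le (by positivity) ?_ ?_
    · rw [Set.Ioc_union_Ioc_eq_Ioc hum hmv, ← hL]
      refine le_of_eq_of_le (eLpNorm_congr_ae ?_) (hB u m hu hum (hmv.trans hv))
      filter_upwards [ae_restrict_mem measurableSet_Ioc] with t ht
      simp [hg₁, ht.2]
    · rw [Set.Ioc_union_Ioc_eq_Ioc hum hmv, ← hR]
      refine le_of_eq_of_le (eLpNorm_congr_ae ?_) (hB m v (hu.trans hum) hmv hv)
      filter_upwards [ae_restrict_mem measurableSet_Ioc] with t ht
      simp [hg₁, not_le.2 ht.1]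
  have h₂ : eLpNorm g₂ q (volume.restrict (Set.Ioc u v))
      ≤ C * eLpNorm f p (volume.restrict (Set.Ioc u v)) := by
    calc eLpNorm g₂ q (volume.restrict (Set.Ioc u v))
        ≤ eLpNorm (fun t => ∫ s in u..m, G t s) q (volume.restrict (Set.Ioc u v)) :=
          eLpNorm_indicator_le _
      _ ≤ eLpNorm (fun t => ∫ s in u..m, G t s) q (volume.restrict (Set.Ioc c d)) :=
          eLpNorm_mono_measure _ (Measure.restrict_mono (Set.Ioc_subset_Ioc hu hv) le_rfl)
      _ ≤ C * eLpNorm f p (volume.restrict (Set.Ioc u m)) := hT u m hu hum (hmv.trans hv)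
      _ ≤ C * eLpNorm f p (volume.restrict (Set.Ioc u v)) := by
          gcongr
  rw [hsum]
  refine (eLpNorm_add_le hm₁.aestronglyMeasurable hm₂.aestronglyMeasurable hq).trans ?_
  refine (add_le_add h₁ h₂).trans (le_of_eq ?_)
  ring

/-- The crude a priori bound: on a bounded interval Hölder's inequality gives some finite constant
for the truncated operator, uniformly over subintervals. -/
lemma exists_apriori_bound {X Y : Type*} [NormedAddCommGroup X] [NormedAddCommGroup Y]
    [NormedSpace ℝ Y] {p q : ℝ≥0∞} (hp : 1 ≤ p) {c d : ℝ} {f : ℝ → X}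
    {G : ℝ → ℝ → Y} (hf : Continuous f) {M : NNReal}
    (hM : ∀ t s, ‖G t s‖ₑ ≤ M * ‖f s‖ₑ) :
    ∃ B : ℝ≥0∞, B ≠ ⊤ ∧ ∀ u v : ℝ, c ≤ u → u ≤ v → v ≤ d →
      eLpNorm (fun t => ∫ s in u..t, G t s) q (volume.restrict (Set.Ioc u v))
        ≤ B * eLpNorm f p (volume.restrict (Set.Ioc u v)) := by
  have hp1 : 0 ≤ 1 / (1 : ℝ≥0∞).toReal - 1 / p.toReal := by
    rcases eq_or_ne p ⊤ with rfl | hp'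
    · simp
    · have : 1 ≤ p.toReal := by simpa using ENNReal.toReal_mono hp' hp
      simpa using inv_le_one_of_one_le₀ this
  have hq0 : 0 ≤ q.toReal⁻¹ := by positivity
  set ℓ : ℝ≥0∞ := ENNReal.ofReal (d - c) with hℓ
  refine ⟨M * ℓ ^ (1 / (1 : ℝ≥0∞).toReal - 1 / p.toReal) * ℓ ^ q.toReal⁻¹, ?_, ?_⟩
  · exact ENNReal.mul_ne_top (ENNReal.mul_ne_top ENNReal.coe_ne_top
      (ENNReal.rpow_ne_top_of_nonneg hp1 ENNReal.ofReal_ne_top))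
      (ENNReal.rpow_ne_top_of_nonneg hq0 ENNReal.ofReal_ne_top)
  intro u v hu huv hv
  have hvol : (volume.restrict (Set.Ioc u v)) Set.univ ≤ ℓ := by
    simp only [Measure.restrict_apply_univ, Real.volume_Ioc, hℓ]
    exact ENNReal.ofReal_le_ofReal (by linarith)
  have hpt : ∀ᵐ t ∂volume.restrict (Set.Ioc u v), ‖∫ s in u..t, G t s‖ₑ
      ≤ M * (eLpNorm f p (volume.restrict (Set.Ioc u v))
        * ℓ ^ (1 / (1 : ℝ≥0∞).toReal - 1 / p.toReal)) := by
    filter_upwards [ae_restrict_mem measurableSet_Ioc] with t ht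
    rw [intervalIntegral.integral_of_le ht.1.le]
    calc ‖∫ s in Set.Ioc u t, G t s‖ₑ
        ≤ ∫⁻ s in Set.Ioc u t, ‖G t s‖ₑ := enorm_integral_le_lintegral_enorm _
      _ ≤ ∫⁻ s in Set.Ioc u t, M * ‖f s‖ₑ := lintegral_mono fun s => hM t s
      _ = M * ∫⁻ s in Set.Ioc u t, ‖f s‖ₑ := lintegral_const_mul _ hf.enorm.measurable
      _ ≤ M * ∫⁻ s in Set.Ioc u v, ‖f s‖ₑ := by
          gcongr
          exact ht.2
      _ = M * eLpNorm f 1 (volume.restrict (Set.Ioc u v)) := by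
          rw [eLpNorm_one_eq_lintegral_enorm]
      _ ≤ _ := by
          gcongr
          refine (eLpNorm_le_eLpNorm_mul_rpow_measure_univ hp hf.aestronglyMeasurable).trans ?_
          gcongr
  refine (eLpNorm_le_of_ae_enorm_bound hpt).trans ?_
  rw [smul_eq_mul]
  calc _ ≤ M * (eLpNorm f p (volume.restrict (Set.Ioc u v))
        * ℓ ^ (1 / (1 : ℝ≥0∞).toReal - 1 / p.toReal)) * ℓ ^ q.toReal⁻¹ := by gcongr
    _ = _ := by ring

/-- The truncated bound on a compact interval. The constant is the fixed point of the affine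
contraction supplied by `bisection_step`; iterating from any finite constant converges to it. -/
lemma truncated_bound {X Y : Type*} [NormedAddCommGroup X] [NormedAddCommGroup Y]
    [NormedSpace ℝ Y] {p q C : ℝ≥0∞} (hp : 1 ≤ p) (hp' : p ≠ ⊤) (hq : 1 ≤ q)
    {θ L : ℝ≥0∞} (hθ : 2 ^ (1 / q.toReal) * 2 ^ (-(1 / p.toReal)) = θ) (hθ1 : θ < 1)
    (hL : θ * L + C = L) {c d : ℝ} (hcd : c ≤ d) {f : ℝ → X}
    {G : ℝ → ℝ → Y} (hf : Continuous f) (hG : Continuous (Function.uncurry G)) {M : NNReal}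
    (hM : ∀ t s, ‖G t s‖ₑ ≤ M * ‖f s‖ₑ)
    (hT : ∀ u m : ℝ, c ≤ u → u ≤ m → m ≤ d →
      eLpNorm (fun t => ∫ s in u..m, G t s) q (volume.restrict (Set.Ioc c d))
        ≤ C * eLpNorm f p (volume.restrict (Set.Ioc u m))) :
    eLpNorm (fun t => ∫ s in c..t, G t s) q (volume.restrict (Set.Ioc c d))
      ≤ L * eLpNorm f p (volume.restrict (Set.Ioc c d)) := by
  obtain ⟨B, hBtop, hB⟩ := exists_apriori_bound (q := q) (c := c) (d := d) hp hf hM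
  have hiter : ∀ n : ℕ, ∀ u v : ℝ, c ≤ u → u ≤ v → v ≤ d →
      eLpNorm (fun t => ∫ s in u..t, G t s) q (volume.restrict (Set.Ioc u v))
        ≤ (θ ^ n * B + L) * eLpNorm f p (volume.restrict (Set.Ioc u v)) := by
    intro n
    induction n with
    | zero =>
      intro u v hu huv hv
      refine (hB u v hu huv hv).trans ?_
      gcongr
      simp
    | succ n ih =>
      intro u v hu huv hv
      refine (bisection_step (by positivity) hp' hq hf hG hT ih hu huv hv).trans (le_of_eq ?_)
      rw [hθ]
      congr 1
      calc θ * (θ ^ n * B + L) + C = θ ^ (n + 1) * B + (θ * L + C) := by ring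
        _ = _ := by rw [hL]
  have hfin : eLpNorm f p (volume.restrict (Set.Ioc c d)) ≠ ⊤ := by
    obtain ⟨R, hR⟩ := (isCompact_Icc (a := c) (b := d)).exists_bound_of_continuousOn hf.continuousOn
    refine ne_top_of_le_ne_top ?_ (eLpNorm_le_of_ae_bound (C := R) ?_)
    · exact ENNReal.mul_ne_top (ENNReal.rpow_ne_top_of_nonneg (by positivity) (by simp))
        ENNReal.ofReal_ne_top
    · filter_upwards [ae_restrict_mem measurableSet_Ioc] with t ht
      exact hR t (Set.Ioc_subset_Icc_self ht)
  have hlim : Filter.Tendsto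
      (fun n : ℕ => (θ ^ n * B + L) * eLpNorm f p (volume.restrict (Set.Ioc c d)))
      Filter.atTop (nhds ((0 * B + L) * eLpNorm f p (volume.restrict (Set.Ioc c d)))) :=
    ENNReal.Tendsto.mul_const ((ENNReal.Tendsto.mul_const
      (ENNReal.tendsto_pow_atTop_nhds_zero_of_lt_one hθ1) (Or.inr hBtop)).add_const L)
      (Or.inr hfin)
  simp only [zero_mul, zero_add] at hlim
  exact ge_of_tendsto' hlim fun n => hiter n c d le_rfl hcd le_rfl

/-- The Christ–Kiselev lemma: if the untruncated operator
`Tf(t) = ∫_a^b K(t,s) f(s) ds` is bounded from `L^p([a,b],X)` to `L^q([a,b],Y)`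
with `p < q`, then so is the truncated operator `Wf(t) = ∫_a^t K(t,s) f(s) ds`,
with a constant depending only on `C`, `p` and `q`. -/
theorem christ_kiselev (p q : ℝ≥0∞) (hp : 1 ≤ p) (hpq : p < q) (C : ℝ) :
    ∃ C' : ℝ,
      ∀ (X Y : Type*) [NormedAddCommGroup X] [NormedSpace ℝ X] [CompleteSpace X]
        [NormedAddCommGroup Y] [NormedSpace ℝ Y] [CompleteSpace Y],
      ∀ (a b : EReal), a < b →
      ∀ K : ℝ → ℝ → X →L[ℝ] Y,
        ContinuousOn (fun pr : ℝ × ℝ => K pr.1 pr.2)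
          (erealInterval a b ×ˢ erealInterval a b) →
        (∀ f : ℝ → X, Continuous f → HasCompactSupport f →
            tsupport f ⊆ erealInterval a b →
          eLpNorm (fun t => ∫ s in erealInterval a b, K t s (f s)) q
              (volume.restrict (erealInterval a b))
            ≤ ENNReal.ofReal C * eLpNorm f p (volume.restrict (erealInterval a b))) →
        ∀ f : ℝ → X, Continuous f → HasCompactSupport f →
            tsupport f ⊆ erealInterval a b →
          eLpNorm (fun t => ∫ s in erealInterval a b ∩ Set.Iic t, K t s (f s)) q
              (volume.restrict (erealInterval a b))
            ≤ ENNReal.ofReal C' * eLpNorm f p (volume.restrict (erealInterval a b)) := by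
  have hp' : p ≠ ⊤ := hpq.ne_top
  have hppos : 0 < p.toReal := ENNReal.toReal_pos (by positivity) hp'
  have hq : 1 ≤ q := hp.trans hpq.le
  -- the contraction factor `θ = 2^{1/q - 1/p}` and the fixed point `L` of `x ↦ θ x + C`
  obtain ⟨θ, hθ⟩ : ∃ θ : ℝ≥0∞, (2 : ℝ≥0∞) ^ (1 / q.toReal) * 2 ^ (-(1 / p.toReal)) = θ := ⟨_, rfl⟩
  have hθ1 : θ < 1 := by
    rw [← hθ, ← ENNReal.rpow_add _ _ (by norm_num) (by norm_num)]
    refine ENNReal.rpow_lt_one_of_one_lt_of_neg (by norm_num) ?_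
    rcases eq_or_ne q ⊤ with rfl | hq'
    · simpa using hppos
    · have := one_div_lt_one_div_of_lt hppos ((ENNReal.toReal_lt_toReal hp' hq').2 hpq)
      linarith
  have h1θ : 1 - θ ≠ 0 := (tsub_pos_of_lt hθ1).ne'
  have h1θ' : 1 - θ ≠ ⊤ := ENNReal.sub_ne_top ENNReal.one_ne_top
  obtain ⟨L, hLdef⟩ : ∃ L : ℝ≥0∞, ENNReal.ofReal C / (1 - θ) = L := ⟨_, rfl⟩
  have hL : θ * L + ENNReal.ofReal C = L := by
    have : L * (1 - θ) = ENNReal.ofReal C := by rw [← hLdef, ENNReal.div_mul_cancel h1θ h1θ']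
    rw [← this, mul_comm θ, ← mul_add, add_tsub_cancel_of_le hθ1.le, mul_one]
  have hLtop : L ≠ ⊤ := by rw [← hLdef]; exact ENNReal.div_ne_top ENNReal.ofReal_ne_top h1θ
  refine ⟨((2 : ℝ≥0∞) ^ (1 / q.toReal) * (L + ENNReal.ofReal C)).toReal, ?_⟩
  rw [ENNReal.ofReal_toReal (ENNReal.mul_ne_top
    (ENNReal.rpow_ne_top_of_nonneg (by positivity) (by norm_num))
    (ENNReal.add_ne_top.2 ⟨hLtop, ENNReal.ofReal_ne_top⟩))]
  intro X Y _ _ _ _ _ _ a b _ K hK hT f hf hfc hfs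
  set I := erealInterval a b with hI
  have hIm : MeasurableSet I :=
    (measurableSet_Icc (a := a) (b := b)).preimage measurable_coe_real_ereal
  rcases (tsupport f).eq_empty_or_nonempty with hemp | hne
  · have h0 : f = 0 := tsupport_eq_empty_iff.1 hemp
    simp [h0]
  -- `[c, d]` is the convex hull of the support of `f`
  set c := sInf (tsupport f) with hc
  set d := sSup (tsupport f) with hd
  have hcm : c ∈ tsupport f := IsCompact.sInf_mem hfc hne
  have hdm : d ∈ tsupport f := IsCompact.sSup_mem hfc hne
  have hsub : tsupport f ⊆ Set.Icc c d := fun s hs =>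
    ⟨csInf_le (IsCompact.bddBelow hfc) hs, le_csSup (IsCompact.bddAbove hfc) hs⟩
  have hcd : c ≤ d := (hsub hcm).2
  have hcdI : Set.Icc c d ⊆ I := fun s hs =>
    ⟨(hfs hcm).1.trans (EReal.coe_le_coe_iff.2 hs.1),
      (EReal.coe_le_coe_iff.2 hs.2).trans (hfs hdm).2⟩
  have hf0 : ∀ s, s ∉ Set.Icc c d → f s = 0 := fun s hs =>
    image_eq_zero_of_notMem_tsupport fun h => hs (hsub h)
  -- clamping both variables to `[c, d]` makes the kernel globally continuous and bounded
  set π : ℝ → ℝ := fun t => max c (min t d) with hπ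
  have hπc : Continuous π := by fun_prop
  have hπm : ∀ t, π t ∈ Set.Icc c d := fun t =>
    ⟨le_max_left _ _, max_le hcd (min_le_right _ _)⟩
  have hπe : ∀ t ∈ Set.Icc c d, π t = t := fun t ht => by
    simp only [hπ]; rw [min_eq_left ht.2, max_eq_right ht.1]
  set G : ℝ → ℝ → Y := fun t s => K (π t) (π s) (f s) with hGdef
  have hκ : Continuous fun pr : ℝ × ℝ => K (π pr.1) (π pr.2) :=
    hK.comp_continuous (f := fun pr : ℝ × ℝ => (π pr.1, π pr.2)) (by fun_prop)
      fun pr => ⟨hcdI (hπm _), hcdI (hπm _)⟩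
  have hG : Continuous (Function.uncurry G) := hκ.clm_apply (hf.comp continuous_snd)
  have hGe : ∀ t ∈ Set.Icc c d, ∀ s, G t s = K t s (f s) := by
    intro t ht s
    by_cases hs : s ∈ Set.Icc c d
    · simp only [hGdef, hπe t ht, hπe s hs]
    · simp [hGdef, hf0 s hs]
  obtain ⟨R, hR⟩ := ((isCompact_Icc (a := c) (b := d)).prod
    (isCompact_Icc (a := c) (b := d))).exists_bound_of_continuousOn hκ.continuousOn
  have hM : ∀ t s, ‖G t s‖ₑ ≤ R.toNNReal * ‖f s‖ₑ := by
    intro t s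
    have h1 : ‖K (π t) (π s)‖ ≤ R := by
      simpa [hπe _ (hπm _)] using hR (π t, π s) ⟨hπm t, hπm s⟩
    refine (ContinuousLinearMap.le_opENorm _ _).trans ?_
    gcongr
    rw [← ofReal_norm]
    exact ENNReal.ofReal_le_ofReal h1
  have hTI : ∀ u m : ℝ, c ≤ u → u ≤ m → m ≤ d →
      eLpNorm (fun t => ∫ s in u..m, G t s) q (volume.restrict (Set.Ioc c d))
        ≤ ENNReal.ofReal C * eLpNorm f p (volume.restrict (Set.Ioc u m)) := by
    intro u m hu hum hm
    refine eLpNorm_integral_truncation_le hG hum fun φ hφ hφ0 => ?_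
    calc eLpNorm (fun t => ∫ s in u..m, φ s • G t s) q (volume.restrict (Set.Ioc c d))
        = eLpNorm (fun t => ∫ s in I, K t s (φ s • f s)) q (volume.restrict (Set.Ioc c d)) := by
          refine eLpNorm_congr_ae ?_
          filter_upwards [ae_restrict_mem measurableSet_Ioc] with t ht
          rw [intervalIntegral.integral_of_le hum,
            setIntegral_eq_integral_of_forall_compl_eq_zero,
            setIntegral_eq_integral_of_forall_compl_eq_zero]
          · simp only [hGe t (Set.Ioc_subset_Icc_self ht), map_smul]
          · intro s hs
            rw [hf0 s fun h => hs (hcdI h), smul_zero, map_zero]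
          · intro s hs
            rw [hφ0 s fun h => hs (Set.Ioo_subset_Ioc_self h), zero_smul]
      _ ≤ eLpNorm (fun t => ∫ s in I, K t s (φ s • f s)) q (volume.restrict I) :=
          eLpNorm_mono_measure _
            (Measure.restrict_mono (Set.Ioc_subset_Icc_self.trans hcdI) le_rfl)
      _ ≤ ENNReal.ofReal C * eLpNorm (fun s => φ s • f s) p (volume.restrict I) :=
          hT (fun s => φ s • f s) (hφ.smul hf) hfc.smul_left
            ((tsupport_smul_subset_right _ _).trans hfs)
      _ ≤ ENNReal.ofReal C * eLpNorm (fun s => φ s • f s) p volume := by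
          gcongr
          exact Measure.restrict_le_self
  have hmain := truncated_bound hp hp' hq hθ hθ1 hL hcd hf hG hM hTI
  have hsplit : I = Set.Icc c d ∪ (I \ Set.Icc c d) := (Set.union_sdiff_cancel hcdI).symm
  conv_lhs => rw [hsplit]
  rw [mul_assoc]
  refine eLpNorm_restrict_union_le (by positivity) ?_ ?_
  · rw [← hsplit, ← Measure.restrict_congr_set (Ioc_ae_eq_Icc (μ := volume) (a := c) (b := d))]
    calc eLpNorm (fun t => ∫ s in I ∩ Set.Iic t, K t s (f s)) q (volume.restrict (Set.Ioc c d))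
        = eLpNorm (fun t => ∫ s in c..t, G t s) q (volume.restrict (Set.Ioc c d)) := by
          refine eLpNorm_congr_ae ?_
          filter_upwards [ae_restrict_mem measurableSet_Ioc] with t ht
          rw [intervalIntegral.integral_of_le ht.1.le, ← integral_Icc_eq_integral_Ioc]
          simp only [hGe t (Set.Ioc_subset_Icc_self ht)]
          refine setIntegral_eq_of_subset_of_forall_sdiff_eq_zero (hIm.inter measurableSet_Iic)
            (fun s hs => ⟨hcdI ⟨hs.1, hs.2.trans ht.2⟩, hs.2⟩) fun s hs => ?_
          rw [hf0 s fun h => hs.2 ⟨h.1, hs.1.2⟩, map_zero]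
      _ ≤ L * eLpNorm f p (volume.restrict (Set.Ioc c d)) := hmain
      _ ≤ (L + ENNReal.ofReal C) * eLpNorm f p (volume.restrict I) := by
          gcongr
          · exact le_self_add
          · exact Set.Ioc_subset_Icc_self.trans hcdI
  · rw [← hsplit]
    -- outside `[c, d]` the truncated operator is either zero or the full one
    calc eLpNorm (fun t => ∫ s in I ∩ Set.Iic t, K t s (f s)) q
          (volume.restrict (I \ Set.Icc c d))
        ≤ eLpNorm (fun t => ∫ s in I, K t s (f s)) q (volume.restrict (I \ Set.Icc c d)) := by
          refine eLpNorm_mono_ae ?_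
          filter_upwards [ae_restrict_mem (hIm.diff measurableSet_Icc)] with t ht
          rcases lt_or_ge t c with htc | htc
          · rw [setIntegral_eq_zero_of_forall_eq_zero fun s hs => ?_]
            · simp
            · rw [hf0 s fun h => absurd h.1 (not_le.2 (lt_of_le_of_lt hs.2 htc)), map_zero]
          · have hdt : d < t := not_le.1 fun h => ht.2 ⟨htc, h⟩
            refine le_of_eq (congrArg _ (setIntegral_eq_of_subset_of_forall_sdiff_eq_zero hIm
              Set.inter_subset_left fun s hs => ?_).symm)
            rw [hf0 s fun h => hs.2 ⟨hs.1, h.2.trans hdt.le⟩, map_zero]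
      _ ≤ eLpNorm (fun t => ∫ s in I, K t s (f s)) q (volume.restrict I) :=
          eLpNorm_mono_measure _ (Measure.restrict_mono Set.sdiff_subset le_rfl)
      _ ≤ ENNReal.ofReal C * eLpNorm f p (volume.restrict I) := hT f hf hfc hfs
      _ ≤ (L + ENNReal.ofReal C) * eLpNorm f p (volume.restrict I) := by
          gcongr
          exact le_add_self
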